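/- Let m ≥ 2, n ≥ 1, let ζ be a primitive nm-th root of unity, let ḡ ∈ GL_n(C) be the monomial matrix sending e_i ↦ e_{i−1} (2 ≤ i ≤ n), e_1 ↦ ζ^n e_n, and let q̄_1 = (1/√n)(1, ζ, ζ^2, ..., ζ^{n−1})^T ∈ C^n. Then ḡ ∈ G(m,1,n), ḡ q̄_1 = ζ q̄_1, and q̄_1 lies on none of the reflection hyperplanes of G(m,1,n) (the orthogonal complements of e_i − ζ^{kn} e_j for 1 ≤ i < j ≤ n, 0 ≤ k < m, and of e_i for 1 ≤ i ≤ n); hence ḡ is a ζ-regular element and (ḡ, ζ, q̄_1) is an admissible triplet of G(m,1,n). -/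

import Mathlib

open Matrix MvPolynomial

namespace Paper

noncomputable section

/-- The standard Hermitian inner product `(v, w) = Σ v_i conj(w_i)` on `ℂ^N`. -/
def herm {N : ℕ} (v w : Fin N → ℂ) : ℂ := ∑ i, v i * (starRingEnd ℂ) (w i)

/-- The reflection `s(v, λ) : w ↦ w - (1 - λ) ((w,v)/(v,v)) v` with root `v` and
nontrivial eigenvalue `λ`, as a matrix. -/
def reflMat {N : ℕ} (v : Fin N → ℂ) (lam : ℂ) : Matrix (Fin N) (Fin N) ℂ :=
  Matrix.of fun i j =>
    (if i = j then (1 : ℂ) else 0) - (1 - lam) * v i * (starRingEnd ℂ) (v j) / herm v v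

/-- The monomial matrix `ι(θ, σ)` with `e_i ↦ θ_{σ(i)} e_{σ(i)}`. -/
def monomialMatrix {N : ℕ} (θ : Fin N → ℂ) (σ : Equiv.Perm (Fin N)) :
    Matrix (Fin N) (Fin N) ℂ :=
  Matrix.of fun j i => if j = σ i then θ (σ i) else 0

/-- The imprimitive reflection group `G(m, p, N)`: all monomial `N × N` matrices whose
nonzero entries are `m`-th roots of unity and whose product of nonzero entries is an
`(m/p)`-th root of unity. -/
def Gimp (m p N : ℕ) : Set (Matrix (Fin N) (Fin N) ℂ) :=
  {M | ∃ (θ : Fin N → ℂ) (σ : Equiv.Perm (Fin N)),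
    (∀ i, θ i ^ m = 1) ∧ (∏ i, θ i) ^ (m / p) = 1 ∧ M = monomialMatrix θ σ}

/-- The `μ`-eigenspace of (the linear map of) a matrix. -/
def eigSpace {n : ℕ} (M : Matrix (Fin n) (Fin n) ℂ) (μ : ℂ) : Submodule ℂ (Fin n → ℂ) :=
  Module.End.eigenspace M.mulVecLin μ

/-!
The matrix `ḡ` is an `n`-cycle with one entry replaced by `ζ ^ n`, so it shifts a geometric
progression of ratio `ζ` by one step, that is, multiplies it by `ζ`. A vector with nonzero
coordinates lies on none of the hyperplanes `x_i = ω x_j`, `ω ^ m = 1`, as soon as the powers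
`x_i ^ m` are distinct. For the geometric progression these powers are proportional to
`(ζ ^ m) ^ i`, and `ζ ^ m` is a primitive `n`-th root of unity.
-/

section Herm

variable {N : ℕ}

theorem herm_eq_dotProduct_star (v w : Fin N → ℂ) : herm v w = v ⬝ᵥ star w := rfl

theorem herm_single_right (v : Fin N → ℂ) (i : Fin N) (a : ℂ) :
    herm v (Pi.single i a) = v i * star a := by
  rw [herm_eq_dotProduct_star, Pi.star_single, dotProduct_single]

theorem herm_single_sub_smul_single (v : Fin N → ℂ) (i j : Fin N) (ω : ℂ) :
    herm v (Pi.single i 1 - ω • Pi.single j 1) = v i - v j * star ω := by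
  rw [herm_eq_dotProduct_star, star_sub, dotProduct_sub, ← herm_eq_dotProduct_star,
    ← herm_eq_dotProduct_star, ← Pi.single_smul, herm_single_right, herm_single_right, star_one,
    mul_one, smul_eq_mul, mul_one]

end Herm

section Regular

variable {N : ℕ}

/-- A regular vector of `G(m,1,N)`: one that is orthogonal to none of the roots `e_i - ω e_j`
(`i ≠ j`, `ω` an `m`-th root of unity) and `e_i`. For `m = 1` the `e_i` are not roots of
`G(1,1,N) = S_N`, and the condition is stronger than regularity. -/
def IsRegularVector (m : ℕ) (v : Fin N → ℂ) : Prop :=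
  (∀ i j : Fin N, i ≠ j → ∀ ω : ℂ, ω ^ m = 1 →
    herm v (Pi.single i 1 - ω • Pi.single j 1) ≠ 0) ∧
  ∀ i : Fin N, herm v (Pi.single i 1) ≠ 0

theorem isRegularVector_of_pow_injective {m : ℕ} {v : Fin N → ℂ} (hv : ∀ i, v i ≠ 0)
    (hinj : Function.Injective fun i => v i ^ m) : IsRegularVector m v := by
  refine ⟨fun i j hij ω hω h => hij (hinj ?_), fun i => ?_⟩
  · rw [herm_single_sub_smul_single, sub_eq_zero] at h
    calc v i ^ m = v j ^ m * star (ω ^ m) := by rw [h, mul_pow, star_pow]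
      _ = v j ^ m := by rw [hω, star_one, mul_one]
  · rw [herm_single_right, star_one, mul_one]
    exact hv i

theorem isRegularVector_geometric {m : ℕ} {c ζ : ℂ} (hm : m ≠ 0) (hc : c ≠ 0)
    (hζ : IsPrimitiveRoot (ζ ^ m) N) :
    IsRegularVector m fun i : Fin N => c * ζ ^ i.1 := by
  refine isRegularVector_of_pow_injective (fun i => ?_) fun i j hij => ?_
  · have hζ₀ : ζ ≠ 0 := (pow_ne_zero_iff hm).mp (hζ.ne_zero i.pos.ne')
    exact mul_ne_zero hc (pow_ne_zero _ hζ₀)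
  · have hpow : (ζ ^ m) ^ i.1 = (ζ ^ m) ^ j.1 := by
      simpa only [mul_pow, pow_right_comm ζ _ m, mul_right_inj' (pow_ne_zero m hc)] using hij
    exact Fin.ext (hζ.pow_inj i.2 j.2 hpow)

end Regular

section Monomial

variable {N : ℕ} (θ : Fin N → ℂ) (σ : Equiv.Perm (Fin N))

theorem monomialMatrix_apply (j i : Fin N) :
    monomialMatrix θ σ j i = if σ.symm j = i then θ j else 0 := by
  simp only [monomialMatrix, Matrix.of_apply, Equiv.symm_apply_eq]
  split_ifs with h
  · rw [h]
  · rfl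

theorem monomialMatrix_mulVec (v : Fin N → ℂ) (j : Fin N) :
    (monomialMatrix θ σ *ᵥ v) j = θ j * v (σ.symm j) := by
  simp only [mulVec, dotProduct, monomialMatrix_apply, ite_mul, zero_mul, Finset.sum_ite_eq,
    Finset.mem_univ, if_true]

end Monomial

section TwistedCycle

variable {n : ℕ}

theorem val_finRotate (j : Fin n) :
    (finRotate n j).1 = if j.1 + 1 = n then 0 else j.1 + 1 := by
  cases n with
  | zero => exact j.elim0
  | succ n => simp only [coe_finRotate, Fin.ext_iff, Fin.val_last, Nat.add_right_cancel_iff]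

/-- The matrix `e_i ↦ e_{i-1}` (`2 ≤ i ≤ n`), `e_1 ↦ a e_n`, which is `ḡ` for `a = ζ ^ n`.
Indices in `Fin n` start at `0`. -/
def twistedCycle (n : ℕ) (a : ℂ) : Matrix (Fin n) (Fin n) ℂ :=
  Matrix.of fun j i : Fin n =>
    if i.1 = 0 then (if j.1 = n - 1 then a else 0)
    else if j.1 + 1 = i.1 then 1 else 0

theorem twistedCycle_eq_monomialMatrix (n : ℕ) (a : ℂ) :
    twistedCycle n a =
      monomialMatrix (fun j => if j.1 + 1 = n then a else 1) (finRotate n).symm := by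
  ext j i
  simp only [twistedCycle, Matrix.of_apply, monomialMatrix_apply, Equiv.symm_symm, Fin.ext_iff,
    val_finRotate]
  grind

theorem twistedCycle_mem_Gimp {m p : ℕ} {a : ℂ} (hp : p ∣ m) (ha : a ^ (m / p) = 1) :
    twistedCycle n a ∈ Gimp m p n := by
  have hθ (j : Fin n) : (if j.1 + 1 = n then a else 1) ^ (m / p) = 1 := by
    rw [ite_pow, ha, one_pow, ite_self]
  refine ⟨_, _, fun j => ?_, ?_, twistedCycle_eq_monomialMatrix n a⟩
  · rw [← Nat.div_mul_cancel hp, pow_mul, hθ, one_pow]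
  · rw [← Finset.prod_pow]
    exact Finset.prod_eq_one fun j _ => hθ j

theorem twistedCycle_mulVec_geometric (c ζ : ℂ) :
    twistedCycle n (ζ ^ n) *ᵥ (fun i => c * ζ ^ i.1) = ζ • fun i : Fin n => c * ζ ^ i.1 := by
  ext j
  rw [twistedCycle_eq_monomialMatrix, monomialMatrix_mulVec, Equiv.symm_symm, val_finRotate,
    Pi.smul_apply, smul_eq_mul]
  split_ifs with hj
  · calc ζ ^ n * (c * ζ ^ 0) = c * ζ ^ (j.1 + 1) := by rw [hj]; ring
      _ = ζ * (c * ζ ^ j.1) := by ring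
  · ring

end TwistedCycle

theorem statement_11_general {m n : ℕ} {c ζ : ℂ} (hm : m ≠ 0) (hc : c ≠ 0)
    (hζ : IsPrimitiveRoot (ζ ^ m) n) :
    twistedCycle n (ζ ^ n) ∈ Gimp m 1 n ∧
    twistedCycle n (ζ ^ n) *ᵥ (fun i => c * ζ ^ i.1) = ζ • (fun i : Fin n => c * ζ ^ i.1) ∧
    IsRegularVector m fun i : Fin n => c * ζ ^ i.1 :=
  ⟨twistedCycle_mem_Gimp (one_dvd m) (by rw [Nat.div_one, pow_right_comm, hζ.pow_eq_one]),
    twistedCycle_mulVec_geometric c ζ, isRegularVector_geometric hm hc hζ⟩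

/-- Let `m ≥ 2`, `n ≥ 1`, `ζ` a primitive `nm`-th root of unity, `ḡ` the
monomial matrix with `e_i ↦ e_{i-1}` (`2 ≤ i ≤ n`), `e_1 ↦ ζ^n e_n`, and
`q̄_1 = (1/√n)(1, ζ, ..., ζ^{n-1})`.  Then `ḡ ∈ G(m,1,n)`, `ḡ q̄_1 = ζ q̄_1`, and `q̄_1`
is orthogonal to none of the roots `e_i - ζ^{kn} e_j` (`i < j`, `0 ≤ k < m`) and `e_i`
of `G(m,1,n)`, i.e. it lies on no reflection hyperplane; hence `ḡ` is `ζ`-regular and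
`(ḡ, ζ, q̄_1)` is an admissible triplet of `G(m,1,n)`. -/
theorem statement_11 (m n : ℕ) (hm : 2 ≤ m) (hn : 1 ≤ n)
    (ζ : ℂ) (hζ : IsPrimitiveRoot ζ (n * m))
    (gbar : Matrix (Fin n) (Fin n) ℂ)
    (hgbar : gbar = Matrix.of fun j i : Fin n =>
      if i.1 = 0 then (if j.1 = n - 1 then ζ ^ n else 0)
      else if j.1 + 1 = i.1 then 1 else 0)
    (qbar₁ : Fin n → ℂ)
    (hqbar₁ : qbar₁ = fun i => (1 / (Real.sqrt n : ℂ)) * ζ ^ i.1) :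
    gbar ∈ Gimp m 1 n ∧
    gbar.mulVec qbar₁ = ζ • qbar₁ ∧
    (∀ i j : Fin n, i < j → ∀ kk : ℕ, kk < m →
      herm qbar₁ ((Pi.single i 1 : Fin n → ℂ) -
        ζ ^ (kk * n) • (Pi.single j 1 : Fin n → ℂ)) ≠ 0) ∧
    (∀ i : Fin n, herm qbar₁ (Pi.single i 1 : Fin n → ℂ) ≠ 0) := by
  subst hgbar hqbar₁
  have hc : 1 / (Real.sqrt n : ℂ) ≠ 0 :=
    one_div_ne_zero (Complex.ofReal_ne_zero.mpr (by positivity))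
  obtain ⟨hG, hq, hij, hi⟩ :=
    statement_11_general (by positivity) hc (hζ.pow (by positivity) (mul_comm n m))
  have hω (k : ℕ) : (ζ ^ (k * n)) ^ m = 1 := by
    rw [← pow_mul, mul_assoc, pow_mul', hζ.pow_eq_one, one_pow]
  exact ⟨hG, hq, fun i j hlt k _ => hij i j hlt.ne _ (hω k), hi⟩

end
end Paper
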